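/- Let u be a distribution on R^n and let ρ be a test function with integral 1, and ρ_ε(x) = ε^{-n} ρ(x/ε). Then u = 0 in D'(R^n) if and only if for every net (x_ε)_{ε∈(0,1]} of points contained in a fixed compact subset of R^n, the regularizations satisfy (u * ρ_ε)(x_ε) → 0 as ε → 0. -/

import Mathlib

open Filter MeasureTheory

/-- A test function on `ℝⁿ`: smooth with compact support. -/
def IsTestFunction {n : ℕ} (φ : (Fin n → ℝ) → ℝ) : Prop :=
  ContDiff ℝ (⊤ : ℕ∞) φ ∧ HasCompactSupport φ

/-! Write `ǧ(y) = g(-y)`. The pairing `⟨u * g, φ⟩ = ⟨u, φ * ǧ⟩` is a limit of Riemann sums of `φ`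
against translates of `ǧ`, so it is at most `‖φ‖₁` times the supremum of `|u * g|` over the
support of `φ`. Take `g = ρ_ε`. A net may pick, for each `ε`, a point where `|u * ρ_ε|` is not
small, so vanishing along all nets in the support of `φ` forces `u * ρ_ε → 0` uniformly there, and
the pairing tends to `0`. But `φ * ǧ → (∫ ρ) φ` in `𝒟`, and therefore `(∫ ρ) ⟨u, φ⟩ = 0`. -/

section SimpleFunctions

open Metric
open scoped Topology

theorem tendstoUniformlyOn_of_forall_selection {ι α β : Type*} [UniformSpace β] {l : Filter ι}
    {f : ι → α → β} {b : β} {s : Set α} (hs : s.Nonempty)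
    (h : ∀ x : ι → α, (∀ i, x i ∈ s) → Tendsto (fun i => f i (x i)) l (𝓝 b)) :
    TendstoUniformlyOn f (fun _ => b) l s := by
  intro V hV
  have worst_point : ∀ i, ∃ a ∈ s, (b, f i a) ∈ V → ∀ a' ∈ s, (b, f i a') ∈ V := by
    intro i
    by_cases hi : ∀ a' ∈ s, (b, f i a') ∈ V
    · exact hs.imp fun a ha => ⟨ha, fun _ => hi⟩
    · push Not at hi
      exact hi.imp fun a ha => ⟨ha.1, fun hV => absurd hV ha.2⟩
  choose x hxs hx using worst_point
  filter_upwards [h x hxs (UniformSpace.ball_mem_nhds b hV)] with i hi using hx i hi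

theorem exists_simpleFunc_dist_lt {X : Type*} [PseudoMetricSpace X]
    [SecondCountableTopology X] [MeasurableSpace X] [OpensMeasurableSpace X] {K : Set X}
    (hK : IsCompact K) (hne : K.Nonempty) {r : ℝ} (hr : 0 < r) :
    ∃ s : SimpleFunc X X, (∀ z, s z ∈ K) ∧ ∀ z ∈ K, dist (s z) z < r := by
  obtain ⟨a, ha⟩ := hne
  refine hK.induction_on (p := fun T => ∃ s : SimpleFunc X X, (∀ z, s z ∈ K) ∧
    ∀ z ∈ T, dist (s z) z < r) ?_ ?_ ?_ ?_
  · exact ⟨.const X a, fun _ => ha, by simp⟩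
  · rintro S T hST ⟨s, hsK, hs⟩
    exact ⟨s, hsK, fun z hz => hs z (hST hz)⟩
  · classical
    rintro S T ⟨s, hsK, hs⟩ ⟨t, htK, ht⟩
    have hmeas : MeasurableSet {z | dist (s z) z < r} :=
      measurableSet_lt (s.measurable.dist measurable_id) measurable_const
    refine ⟨.piecewise _ hmeas s t, fun z => ?_, fun z hz => ?_⟩
    · by_cases hz : dist (s z) z < r <;> simp [hz, hsK, htK]
    · by_cases hzr : dist (s z) z < r
      · simp [hzr]
      · have hzT : z ∈ T := hz.resolve_left fun hzS => hzr (hs z hzS)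
        simp [hzr, ht z hzT]
  · intro c hc
    refine ⟨ball c r, mem_nhdsWithin_of_mem_nhds (ball_mem_nhds c hr), .const X c,
      fun _ => hc, fun z hz => ?_⟩
    simpa [dist_comm] using hz

theorem exists_simpleFunc_tendstoUniformlyOn_id {X : Type*} [PseudoMetricSpace X]
    [SecondCountableTopology X] [MeasurableSpace X] [OpensMeasurableSpace X] {K : Set X}
    (hK : IsCompact K) (hne : K.Nonempty) :
    ∃ s : ℕ → SimpleFunc X X, (∀ k z, s k z ∈ K) ∧
      TendstoUniformlyOn (fun k => s k) id atTop K := by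
  choose s hsK hs using fun k : ℕ =>
    exists_simpleFunc_dist_lt hK hne (Nat.one_div_pos_of_nat (α := ℝ) (n := k))
  refine ⟨s, hsK, Metric.tendstoUniformlyOn_iff.2 fun r hr => ?_⟩
  filter_upwards [tendsto_one_div_add_atTop_nhds_zero_nat.eventually_lt_const hr] with k hk z hz
  rw [dist_comm]
  exact (hs k z hz).trans hk

variable {X Y : Type*} [MeasurableSpace X] {μ : Measure X}

theorem integral_smul_comp_simpleFunc {F : Type*} [NormedAddCommGroup F] [NormedSpace ℝ F]
    [CompleteSpace F] {w : X → ℝ} (hw : Integrable w μ) (s : SimpleFunc X Y) (Ψ : Y → F) :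
    ∫ z, w z • Ψ (s z) ∂μ = ∑ a ∈ s.range, (∫ z in s ⁻¹' {a}, w z ∂μ) • Ψ a := by
  classical
  have fiberwise : ∀ z, w z • Ψ (s z) = ∑ a ∈ s.range, (s ⁻¹' {a}).indicator w z • Ψ a := by
    intro z
    rw [Finset.sum_eq_single_of_mem (s z) (s.mem_range_self z)]
    · simp
    · intro a _ ha
      simp [ha.symm]
  simp_rw [fiberwise]
  rw [integral_finsetSum _ fun a _ => (hw.indicator (s.measurableSet_fiber a)).smul_const _]
  simp_rw [integral_smul_const, integral_indicator (s.measurableSet_fiber _)]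

theorem sum_abs_setIntegral_fiber_le {w : X → ℝ} (hw : Integrable w μ) (s : SimpleFunc X Y) :
    ∑ a ∈ s.range, |∫ z in s ⁻¹' {a}, w z ∂μ| ≤ ∫ z, ‖w z‖ ∂μ := by
  calc ∑ a ∈ s.range, |∫ z in s ⁻¹' {a}, w z ∂μ|
      ≤ ∑ a ∈ s.range, ∫ z in s ⁻¹' {a}, ‖w z‖ ∂μ :=
        Finset.sum_le_sum fun a _ => norm_integral_le_integral_norm (μ := μ.restrict (s ⁻¹' {a})) w
    _ = ∫ z, ‖w z‖ ∂μ := by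
        simpa using (integral_smul_comp_simpleFunc hw.norm s fun _ => (1 : ℝ)).symm

end SimpleFunctions

section Convolution

open ContinuousLinearMap Function
open scoped Convolution Pointwise

variable {E F : Type*} [NormedAddCommGroup E] [MeasurableSpace E] {μ : Measure E}
  [NormedAddCommGroup F] [NormedSpace ℝ F]

/-- The Riemann sum of `∫ φ z * g (y - z) ∂μ` whose cells are the fibres of `s`, the value of `s`
on a fibre being its sample point. -/
noncomputable def riemannSum (μ : Measure E) (φ : E → ℝ) (s : SimpleFunc E E) (g : E → ℝ) :
    E → ℝ :=
  ∑ a ∈ s.range, (∫ z in s ⁻¹' {a}, φ z ∂μ) • fun y => g (y - a)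

theorem support_riemannSum_subset {φ g : E → ℝ} {s : SimpleFunc E E} {K : Set E}
    (hs : ∀ z, s z ∈ K) : support (riemannSum μ φ s g) ⊆ K + support g := by
  intro y hy
  rw [mem_support, riemannSum, Finset.sum_apply] at hy
  obtain ⟨a, ha, hay⟩ := Finset.exists_ne_zero_of_sum_ne_zero hy
  obtain ⟨z, rfl⟩ := SimpleFunc.mem_range.1 ha
  exact ⟨s z, hs z, y - s z, right_ne_zero_of_mul hay, add_sub_cancel _ _⟩

theorem norm_apply_riemannSum_le (u : (E → ℝ) →ₗ[ℝ] F) {φ g : E → ℝ} (hφ : Integrable φ μ)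
    {s : SimpleFunc E E} {C : ℝ} (hC : ∀ z, ‖u fun y => g (y - s z)‖ ≤ C) :
    ‖u (riemannSum μ φ s g)‖ ≤ (∫ z, ‖φ z‖ ∂μ) * C := by
  have hC₀ : 0 ≤ C := (norm_nonneg _).trans (hC 0)
  rw [riemannSum, map_sum]
  calc ‖∑ a ∈ s.range, u ((∫ z in s ⁻¹' {a}, φ z ∂μ) • fun y => g (y - a))‖
      ≤ ∑ a ∈ s.range, |∫ z in s ⁻¹' {a}, φ z ∂μ| * C := by
        refine norm_sum_le_of_le _ fun a ha => ?_
        obtain ⟨z, rfl⟩ := SimpleFunc.mem_range.1 ha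
        rw [map_smul, norm_smul, Real.norm_eq_abs]
        gcongr
        exact hC z
    _ = (∑ a ∈ s.range, |∫ z in s ⁻¹' {a}, φ z ∂μ|) * C := (Finset.sum_mul ..).symm
    _ ≤ (∫ z, ‖φ z‖ ∂μ) * C := by gcongr; exact sum_abs_setIntegral_fiber_le hφ s

theorem iteratedFDeriv_riemannSum [NormedSpace ℝ E] {φ g : E → ℝ} (hφ : Integrable φ μ)
    (s : SimpleFunc E E) {m : ℕ} (hg : ContDiff ℝ m g) (y : E) :
    iteratedFDeriv ℝ m (riemannSum μ φ s g) y =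
      ∫ z, φ z • iteratedFDeriv ℝ m g (y - s z) ∂μ := by
  have contDiffAt_translate : ∀ a, ContDiffAt ℝ m (fun y => g (y - a)) y := fun a =>
    (hg.comp (contDiff_id.sub contDiff_const)).contDiffAt
  have contDiffAt_term : ∀ (a : E) (c : ℝ), ContDiffAt ℝ m (c • fun y => g (y - a)) y := fun a _ =>
    contDiffAt_const.smul (contDiffAt_translate a)
  rw [integral_smul_comp_simpleFunc hφ s fun a => iteratedFDeriv ℝ m g (y - a), riemannSum,
    iteratedFDeriv_sum_apply fun a _ => contDiffAt_term a _]
  refine Finset.sum_congr rfl fun a _ => ?_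
  rw [iteratedFDeriv_const_smul_apply (contDiffAt_translate a), iteratedFDeriv_comp_sub]

variable [BorelSpace E]

theorem convolution_lsmul_comm [μ.IsAddLeftInvariant] [μ.IsNegInvariant]
    (f g : E → ℝ) : f ⋆[lsmul ℝ ℝ, μ] g = g ⋆[lsmul ℝ ℝ, μ] f := by
  ext y
  rw [convolution_lsmul_swap, convolution_lsmul]
  simp only [smul_eq_mul, mul_comm]

theorem tendstoUniformly_integral_smul_of_dist_lt [SecondCountableTopology E] {ι X : Type*}
    {l : Filter ι} [MeasurableSpace X] {ν : Measure X} {w : ι → X → ℝ} {p q : ι → X → E}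
    {Ψ G : E → F} {C : ℝ}
    (hw : ∀ i, Integrable (w i) ν) (hC : ∀ i, ∫ z, ‖w i z‖ ∂ν ≤ C)
    (hΨ : UniformContinuous Ψ) (hΨb : ∃ B, ∀ y, ‖Ψ y‖ ≤ B)
    (hp : ∀ i, Measurable (p i)) (hq : ∀ i, Measurable (q i))
    (hpq : ∀ r > 0, ∀ᶠ i in l, ∀ z ∈ support (w i), dist (p i z) (q i z) < r)
    (hG : ∀ i y, ∫ z, w i z • Ψ (y - q i z) ∂ν = G y) :
    TendstoUniformly (fun i y => ∫ z, w i z • Ψ (y - p i z) ∂ν) G l := by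
  obtain ⟨B, hB⟩ := hΨb
  have integrable_translate : ∀ i y (o : X → E), Measurable o →
      Integrable (fun z => w i z • Ψ (y - o z)) ν := fun i y o ho =>
    (hw i).smul_bdd B (hΨ.continuous.comp_aestronglyMeasurable
      (ho.const_sub y).aestronglyMeasurable) (.of_forall fun _ => hB _)
  rw [Metric.tendstoUniformly_iff]
  intro η hη
  obtain ⟨δ, hδ, hδη⟩ := exists_pos_mul_lt hη C
  obtain ⟨r, hr, hΨr⟩ := Metric.uniformContinuous_iff.1 hΨ δ hδ
  filter_upwards [hpq r hr] with i hi y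
  rw [dist_comm, dist_eq_norm, ← hG i y,
    ← integral_sub (integrable_translate i y _ (hp i)) (integrable_translate i y _ (hq i))]
  calc ‖∫ z, (w i z • Ψ (y - p i z) - w i z • Ψ (y - q i z)) ∂ν‖
      ≤ ∫ z, δ * ‖w i z‖ ∂ν := by
        refine norm_integral_le_of_norm_le ((hw i).norm.const_mul δ) (.of_forall fun z => ?_)
        rw [← smul_sub, norm_smul, mul_comm]
        by_cases hz : w i z = 0
        · simp [hz]
        · gcongr
          rw [← dist_eq_norm]
          exact (hΨr ((dist_sub_left _ _ _).trans_lt (hi z hz))).le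
    _ = δ * ∫ z, ‖w i z‖ ∂ν := integral_const_mul _ _
    _ ≤ C * δ := by rw [mul_comm]; gcongr; exact hC i
    _ < η := hδη

variable [NormedSpace ℝ E]

theorem iteratedFDeriv_convolution_right [SFinite μ] [μ.IsAddLeftInvariant] {f : E → ℝ}
    {g : E → F} {m : ℕ} (hf : LocallyIntegrable f μ) (hg : ContDiff ℝ m g)
    (hgc : HasCompactSupport g) :
    iteratedFDeriv ℝ m (f ⋆[lsmul ℝ ℝ, μ] g) = f ⋆[lsmul ℝ ℝ, μ] iteratedFDeriv ℝ m g := by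
  induction m with
  | zero =>
    ext1 y
    exact ((continuousMultilinearCurryFin0 ℝ E F).symm.toContinuousLinearEquiv.integral_comp_comm
      (μ := μ) fun x => f x • g (y - x)).symm
  | succ m ih =>
    have hDg : ContDiff ℝ 1 (iteratedFDeriv ℝ m g) :=
      hg.iteratedFDeriv_right (by norm_cast; omega)
    ext1 y
    rw [iteratedFDeriv_succ_eq_comp_left, comp_apply, ih (hg.of_le (by norm_cast; omega)),
      ((hgc.iteratedFDeriv m).hasFDerivAt_convolution_right (lsmul ℝ ℝ) hf hDg y).fderiv,
      iteratedFDeriv_succ_eq_comp_left]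
    exact (ContinuousLinearEquiv.integral_comp_comm (𝕜 := ℝ) (E := E →L[ℝ] E [×m]→L[ℝ] F)
      (F := E [×(m + 1)]→L[ℝ] F)
      (continuousMultilinearCurryLeftEquiv ℝ (fun _ => E) F).symm.toContinuousLinearEquiv
      (μ := μ) fun x => f x • fderiv ℝ (iteratedFDeriv ℝ m g) (y - x)).symm

end Convolution

section TestFunctions

open ContinuousLinearMap Function Metric
open scoped ContDiff Convolution Pointwise Topology

variable {E F : Type*} [NormedAddCommGroup E] [NormedSpace ℝ E] [NormedAddCommGroup F]
  [NormedSpace ℝ F]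

variable (E) in
/-- The space `𝒟(E)` of smooth compactly supported real functions on `E`, without its topology;
for `E = ℝⁿ` its elements are the functions satisfying `IsTestFunction`. -/
def testFunctions : Submodule ℝ (E → ℝ) where
  carrier := {φ | ContDiff ℝ ∞ φ ∧ HasCompactSupport φ}
  zero_mem' := ⟨contDiff_const, .zero⟩
  add_mem' hφ hψ := ⟨hφ.1.add hψ.1, hφ.2.add hψ.2⟩
  smul_mem' _ _ hφ := ⟨contDiff_const.smul hφ.1, hφ.2.smul_left⟩

theorem contDiff_of_mem_testFunctions {φ : E → ℝ} (hφ : φ ∈ testFunctions E) (m : ℕ) :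
    ContDiff ℝ m φ :=
  hφ.1.of_le (by exact_mod_cast le_top)

theorem uniformContinuous_iteratedFDeriv {φ : E → ℝ} (hφ : φ ∈ testFunctions E) (m : ℕ) :
    UniformContinuous (iteratedFDeriv ℝ m φ) :=
  (hφ.2.iteratedFDeriv m).uniformContinuous_of_continuous
    (hφ.1.continuous_iteratedFDeriv (by exact_mod_cast le_top))

theorem exists_norm_iteratedFDeriv_le {φ : E → ℝ} (hφ : φ ∈ testFunctions E) (m : ℕ) :
    ∃ B, ∀ y, ‖iteratedFDeriv ℝ m φ y‖ ≤ B :=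
  (hφ.2.iteratedFDeriv m).exists_bound_of_continuous
    (uniformContinuous_iteratedFDeriv hφ m).continuous

theorem comp_homeomorph_mem_testFunctions {φ : E → ℝ} (hφ : φ ∈ testFunctions E) (e : E ≃ₜ E)
    (he : ContDiff ℝ ∞ e) : φ ∘ e ∈ testFunctions E :=
  ⟨hφ.1.comp he, hφ.2.comp_homeomorph e⟩

theorem comp_neg_mem_testFunctions {φ : E → ℝ} (hφ : φ ∈ testFunctions E) :
    (fun y => φ (-y)) ∈ testFunctions E :=
  comp_homeomorph_mem_testFunctions hφ (.neg E) contDiff_neg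

theorem comp_sub_right_mem_testFunctions {φ : E → ℝ} (hφ : φ ∈ testFunctions E) (a : E) :
    (fun y => φ (y - a)) ∈ testFunctions E :=
  comp_homeomorph_mem_testFunctions hφ (.subRight a) (contDiff_id.sub contDiff_const)

theorem comp_sub_left_mem_testFunctions {φ : E → ℝ} (hφ : φ ∈ testFunctions E) (a : E) :
    (fun y => φ (a - y)) ∈ testFunctions E :=
  comp_homeomorph_mem_testFunctions hφ (.subLeft a) (contDiff_const.sub contDiff_id)

/-- Convergence of a sequence in `𝒟(E)`: all supports lie in one compact set and all derivatives
converge uniformly. -/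
def TendstoTest (f : ℕ → E → ℝ) (φ : E → ℝ) : Prop :=
  ∃ K, IsCompact K ∧ (∀ k, f k ∈ testFunctions E ∧ tsupport (f k) ⊆ K) ∧
    ∀ m : ℕ, TendstoUniformly (fun k => iteratedFDeriv ℝ m (f k)) (iteratedFDeriv ℝ m φ) atTop

/-- A distribution on `E` with values in `F`: a linear map that is sequentially continuous on
`𝒟(E)`. As a linear map it is defined on all functions, but only its values on `testFunctions E`
are constrained. -/
def IsDistribution (u : (E → ℝ) →ₗ[ℝ] F) : Prop :=
  ∀ ⦃f : ℕ → E → ℝ⦄ ⦃φ : E → ℝ⦄, φ ∈ testFunctions E → TendstoTest f φ →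
    Tendsto (fun k => u (f k)) atTop (𝓝 (u φ))

theorem isDistribution_of_tendsto_zero {u : (E → ℝ) →ₗ[ℝ] F}
    (hu : ∀ f : ℕ → E → ℝ, TendstoTest f 0 → Tendsto (fun k => u (f k)) atTop (𝓝 0)) :
    IsDistribution u := by
  rintro f φ hφ ⟨K, hK, hf, hlim⟩
  have sub_null : TendstoTest (fun k => f k - φ) 0 := by
    refine ⟨K ∪ tsupport φ, hK.union hφ.2, fun k => ⟨sub_mem (hf k).1 hφ,
      (tsupport_sub _ _).trans (Set.union_subset_union_left _ (hf k).2)⟩, fun m => ?_⟩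
    have iteratedFDeriv_diff : ∀ k, iteratedFDeriv ℝ m (f k - φ) =
        iteratedFDeriv ℝ m (f k) - iteratedFDeriv ℝ m φ := fun k =>
      iteratedFDeriv_sub (contDiff_of_mem_testFunctions (hf k).1 m)
        (contDiff_of_mem_testFunctions hφ m)
    rw [Metric.tendstoUniformly_iff]
    simpa [iteratedFDeriv_diff, dist_eq_norm, norm_sub_rev] using
      Metric.tendstoUniformly_iff.1 (hlim m)
  simpa using (hu _ sub_null).add_const (u φ)

/-- The value `(u * g)(x)` of the convolution of the linear functional `u` with `g`. -/
def regularization (u : (E → ℝ) →ₗ[ℝ] F) (g : E → ℝ) (x : E) : F :=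
  u fun y => g (x - y)

/-- The rescaled function `ρ_ε(x) = ε⁻ⁿ ρ(x/ε)` on an `n`-dimensional space. -/
noncomputable def mollifier (ρ : E → ℝ) (ε : ℝ) (x : E) : ℝ :=
  (ε ^ Module.finrank ℝ E)⁻¹ * ρ (ε⁻¹ • x)

theorem mollifier_mem_testFunctions {ρ : E → ℝ} (hρ : ρ ∈ testFunctions E) {ε : ℝ}
    (hε : ε ≠ 0) : mollifier ρ ε ∈ testFunctions E :=
  Submodule.smul_mem _ _ (comp_homeomorph_mem_testFunctions hρ
    (.smulOfNeZero ε⁻¹ (inv_ne_zero hε)) (contDiff_const_smul ε⁻¹))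

theorem support_mollifier_subset {ρ : E → ℝ} {R ε : ℝ} (hR : support ρ ⊆ closedBall 0 R)
    (hε : 0 < ε) : support (mollifier ρ ε) ⊆ closedBall 0 (ε * R) := by
  intro x hx
  have hxR := mem_closedBall_zero_iff.1 (hR (right_ne_zero_of_mul hx))
  rwa [norm_smul, norm_inv, Real.norm_of_nonneg hε.le, inv_mul_le_iff₀ hε,
    ← mem_closedBall_zero_iff] at hxR

theorem norm_mollifier (ρ : E → ℝ) {ε : ℝ} (hε : 0 ≤ ε) (x : E) :
    ‖mollifier ρ ε x‖ = mollifier (fun y => ‖ρ y‖) ε x := by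
  rw [mollifier, norm_mul, Real.norm_of_nonneg (by positivity), mollifier]

variable [MeasurableSpace E] {μ : Measure E}

theorem riemannSum_mem_testFunctions {φ g : E → ℝ} (s : SimpleFunc E E)
    (hg : g ∈ testFunctions E) : riemannSum μ φ s g ∈ testFunctions E :=
  sum_mem fun a _ => Submodule.smul_mem _ _ (comp_sub_right_mem_testFunctions hg a)

variable [BorelSpace E]

theorem integrable_of_mem_testFunctions [IsFiniteMeasureOnCompacts μ] {φ : E → ℝ}
    (hφ : φ ∈ testFunctions E) : Integrable φ μ :=
  hφ.1.continuous.integrable_of_hasCompactSupport hφ.2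

theorem convolution_mem_testFunctions {f g : E → ℝ} (hf : LocallyIntegrable f μ)
    (hfc : HasCompactSupport f) (hg : g ∈ testFunctions E) :
    f ⋆[lsmul ℝ ℝ, μ] g ∈ testFunctions E :=
  ⟨hg.2.contDiff_convolution_right _ hf hg.1, hfc.convolution _ hg.2⟩

theorem tendstoTest_riemannSum [SecondCountableTopology E] [SFinite μ] [μ.IsAddLeftInvariant]
    {φ g : E → ℝ} {s : ℕ → SimpleFunc E E} {K : Set E} (hφ : Integrable φ μ)
    (hg : g ∈ testFunctions E) (hK : IsCompact K) (hφK : support φ ⊆ K)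
    (hsK : ∀ k z, s k z ∈ K) (hs : TendstoUniformlyOn (fun k => s k) id atTop K) :
    TendstoTest (fun k => riemannSum μ φ (s k) g) (φ ⋆[lsmul ℝ ℝ, μ] g) := by
  have hL : IsCompact (K + tsupport g) := hK.add hg.2
  refine ⟨K + tsupport g, hL, fun k => ⟨riemannSum_mem_testFunctions _ hg,
    closure_minimal ((support_riemannSum_subset (hsK k)).trans
      (Set.add_subset_add_left (subset_tsupport g))) hL.isClosed⟩, fun m => ?_⟩
  have hgm := contDiff_of_mem_testFunctions hg m
  simp only [funext (iteratedFDeriv_riemannSum hφ _ hgm)]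
  rw [iteratedFDeriv_convolution_right hφ.locallyIntegrable hgm hg.2]
  refine tendstoUniformly_integral_smul_of_dist_lt (w := fun _ => φ) (q := fun _ => id)
    (fun _ => hφ) (fun _ => le_rfl) (uniformContinuous_iteratedFDeriv hg m)
    (exists_norm_iteratedFDeriv_le hg m) (fun k => (s k).measurable) (fun _ => measurable_id)
    (fun r hr => ?_) fun _ _ => rfl
  filter_upwards [Metric.tendstoUniformlyOn_iff.1 hs r hr] with k hk z hz
  rw [dist_comm]
  exact hk z (hφK hz)

theorem tendstoTest_convolution [ProperSpace E] [SFinite μ] [μ.IsAddLeftInvariant]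
    {g : ℕ → E → ℝ} {φ : E → ℝ} {c C : ℝ} {R : ℕ → ℝ} (hg : ∀ k, Integrable (g k) μ)
    (hgc : ∀ k, ∫ z, g k z ∂μ = c) (hgC : ∀ k, ∫ z, ‖g k z‖ ∂μ ≤ C)
    (hgR : ∀ k, support (g k) ⊆ closedBall 0 (R k)) (hR : Tendsto R atTop (𝓝 0))
    (hφ : φ ∈ testFunctions E) :
    TendstoTest (fun k => g k ⋆[lsmul ℝ ℝ, μ] φ) (c • φ) := by
  obtain ⟨R₀, hR₀⟩ := hR.bddAbove_range
  have hgR₀ : ∀ k, support (g k) ⊆ closedBall 0 R₀ := fun k =>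
    (hgR k).trans (closedBall_subset_closedBall (hR₀ (Set.mem_range_self k)))
  have hL : IsCompact (closedBall 0 R₀ + tsupport φ) := (isCompact_closedBall 0 R₀).add hφ.2
  refine ⟨_, hL, fun k => ⟨convolution_mem_testFunctions (hg k).locallyIntegrable
    (.of_support_subset_isCompact (isCompact_closedBall 0 R₀) (hgR₀ k)) hφ,
    closure_minimal ((support_convolution_subset _).trans
      (Set.add_subset_add (hgR₀ k) (subset_tsupport φ))) hL.isClosed⟩, fun m => ?_⟩
  have hφm := contDiff_of_mem_testFunctions hφ m
  simp only [iteratedFDeriv_convolution_right (hg _).locallyIntegrable hφm hφ.2]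
  refine tendstoUniformly_integral_smul_of_dist_lt (p := fun _ => id) (q := fun _ _ => 0)
    hg hgC (uniformContinuous_iteratedFDeriv hφ m) (exists_norm_iteratedFDeriv_le hφ m)
    (fun _ => measurable_id) (fun _ => measurable_const) (fun r hr => ?_) fun k y => ?_
  · filter_upwards [hR.eventually_lt_const hr] with k hk z hz
    exact (hgR k hz).trans_lt hk
  · simp only [sub_zero]
    rw [integral_smul_const, hgc, iteratedFDeriv_const_smul_apply hφm.contDiffAt]

theorem IsDistribution.norm_apply_convolution_le [SecondCountableTopology E] [SFinite μ]
    [μ.IsAddLeftInvariant] {u : (E → ℝ) →ₗ[ℝ] F} (hu : IsDistribution u) {φ g : E → ℝ} {C : ℝ}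
    (hφ : Integrable φ μ) (hφc : HasCompactSupport φ) (hg : g ∈ testFunctions E)
    (hC : ∀ x ∈ tsupport φ, ‖regularization u g x‖ ≤ C) :
    ‖u (φ ⋆[lsmul ℝ ℝ, μ] fun y => g (-y))‖ ≤ (∫ z, ‖φ z‖ ∂μ) * C := by
  rcases (tsupport φ).eq_empty_or_nonempty with hempty | hne
  · simp [tsupport_eq_empty_iff.1 hempty]
  · obtain ⟨s, hsK, hs⟩ := exists_simpleFunc_tendstoUniformlyOn_id hφc hne
    have hg' := comp_neg_mem_testFunctions hg
    have riemannSums_tendsto := hu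
      (convolution_mem_testFunctions hφ.locallyIntegrable hφc hg')
      (tendstoTest_riemannSum hφ hg' hφc (subset_tsupport φ) hsK hs)
    refine le_of_tendsto riemannSums_tendsto.norm (.of_forall fun k => ?_)
    refine norm_apply_riemannSum_le u hφ fun z => ?_
    simpa only [regularization, neg_sub] using hC _ (hsK k z)

theorem integral_mollifier [FiniteDimensional ℝ E] [μ.IsAddHaarMeasure] (ρ : E → ℝ) {ε : ℝ}
    (hε : 0 < ε) : ∫ x, mollifier ρ ε x ∂μ = ∫ x, ρ x ∂μ := by
  simp only [mollifier]
  rw [integral_const_mul, Measure.integral_comp_inv_smul_of_nonneg μ ρ hε.le, smul_eq_mul,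
    inv_mul_cancel_left₀ (pow_pos hε _).ne']

theorem tendstoTest_mollifier_convolution [FiniteDimensional ℝ E] [μ.IsAddHaarMeasure]
    {ρ φ : E → ℝ} (hρ : ρ ∈ testFunctions E) (hφ : φ ∈ testFunctions E) {ε : ℕ → ℝ}
    (hε : ∀ k, 0 < ε k) (hε₀ : Tendsto ε atTop (𝓝 0)) :
    TendstoTest (fun k => mollifier ρ (ε k) ⋆[lsmul ℝ ℝ, μ] φ) ((∫ x, ρ x ∂μ) • φ) := by
  obtain ⟨R, hR⟩ := hρ.2.isBounded.subset_closedBall (0 : E)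
  refine tendstoTest_convolution (C := ∫ x, ‖ρ x‖ ∂μ) (R := fun k => ε k * R)
    (fun k => integrable_of_mem_testFunctions (mollifier_mem_testFunctions hρ (hε k).ne'))
    (fun k => integral_mollifier ρ (hε k)) (fun k => ?_)
    (fun k => support_mollifier_subset ((subset_tsupport ρ).trans hR) (hε k)) ?_ hφ
  · simp_rw [norm_mollifier ρ (hε k).le]
    exact (integral_mollifier _ (hε k)).le
  · simpa using hε₀.mul_const R

theorem IsDistribution.tendsto_apply_convolution_zero [SecondCountableTopology E] [SFinite μ]
    [μ.IsAddLeftInvariant] {u : (E → ℝ) →ₗ[ℝ] F} (hu : IsDistribution u) {ι : Type*}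
    {l : Filter ι} {φ : E → ℝ} {g : ι → E → ℝ} (hφ : Integrable φ μ) (hφc : HasCompactSupport φ)
    (hg : ∀ i, g i ∈ testFunctions E)
    (hlim : TendstoUniformlyOn (fun i => regularization u (g i)) 0 l (tsupport φ)) :
    Tendsto (fun i => u (φ ⋆[lsmul ℝ ℝ, μ] fun y => g i (-y))) l (𝓝 0) := by
  rw [Metric.tendsto_nhds]
  intro η hη
  obtain ⟨δ, hδ, hδη⟩ := exists_pos_mul_lt hη (∫ z, ‖φ z‖ ∂μ)
  filter_upwards [Metric.tendstoUniformlyOn_iff.1 hlim δ hδ] with i hi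
  rw [dist_zero_right]
  refine (hu.norm_apply_convolution_le hφ hφc (hg i) fun x hx => ?_).trans_lt hδη
  simpa using (hi x hx).le

theorem IsDistribution.eq_zero_of_tendstoUniformlyOn_regularization [FiniteDimensional ℝ E]
    [μ.IsAddHaarMeasure] {u : (E → ℝ) →ₗ[ℝ] F} (hu : IsDistribution u) {ρ φ : E → ℝ}
    (hρ : ρ ∈ testFunctions E) (hρ₀ : ∫ x, ρ x ∂μ ≠ 0) (hφ : φ ∈ testFunctions E)
    (hlim : TendstoUniformlyOn (fun ε => regularization u (mollifier ρ ε)) 0 (𝓝[>] 0)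
      (tsupport φ)) :
    u φ = 0 := by
  let ε : ℕ → ℝ := fun k => 1 / ((k : ℝ) + 1)
  have hε : ∀ k, 0 < ε k := fun _ => Nat.one_div_pos_of_nat
  have hε₀ : Tendsto ε atTop (𝓝 0) := tendsto_one_div_add_atTop_nhds_zero_nat
  have hε₀' : Tendsto ε atTop (𝓝[>] 0) := tendsto_nhdsWithin_iff.2 ⟨hε₀, .of_forall hε⟩
  have pairing_tendsto_zero := hu.tendsto_apply_convolution_zero (μ := μ)
    (integrable_of_mem_testFunctions hφ) hφ.2 (fun k => mollifier_mem_testFunctions hρ (hε k).ne')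
    fun V hV => hε₀'.eventually (hlim V hV)
  have pairing_tendsto := hu (Submodule.smul_mem _ _ hφ)
    (tendstoTest_mollifier_convolution (μ := μ) (comp_neg_mem_testFunctions hρ) hφ hε hε₀)
  have mollifier_reflect : ∀ k, mollifier (fun y => ρ (-y)) (ε k) =
      fun y => mollifier ρ (ε k) (-y) := fun k => by
    ext y
    simp only [mollifier, smul_neg]
  simp only [mollifier_reflect, convolution_lsmul_comm _ φ, map_smul,
    integral_neg_eq_self] at pairing_tendsto
  exact (smul_eq_zero.1 (tendsto_nhds_unique pairing_tendsto pairing_tendsto_zero)).resolve_left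
    hρ₀

theorem distribution_zero_iff_regularizations_vanish_on_compact_nets_general
    [FiniteDimensional ℝ E] [μ.IsAddHaarMeasure] {u : (E → ℝ) →ₗ[ℝ] F} (hu : IsDistribution u)
    {ρ : E → ℝ} (hρ : ρ ∈ testFunctions E) (hρ₀ : ∫ x, ρ x ∂μ ≠ 0) :
    (∀ φ ∈ testFunctions E, u φ = 0) ↔
      ∀ (x : ℝ → E) (K : Set E), IsCompact K → (∀ ε, 0 < ε → ε ≤ 1 → x ε ∈ K) →
        Tendsto (fun ε => regularization u (mollifier ρ ε) (x ε)) (𝓝[>] 0) (𝓝 0) := by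
  constructor
  · intro hzero x _ _ _
    refine tendsto_const_nhds.congr' ?_
    filter_upwards [self_mem_nhdsWithin] with ε hε
    exact (hzero _ (comp_sub_left_mem_testFunctions
      (mollifier_mem_testFunctions hρ (ne_of_gt hε)) (x ε))).symm
  · intro hnets φ hφ
    refine hu.eq_zero_of_tendstoUniformlyOn_regularization hρ hρ₀ hφ ?_
    rcases (tsupport φ).eq_empty_or_nonempty with hempty | hne
    · exact hempty ▸ tendstoUniformlyOn_empty
    · exact tendstoUniformlyOn_of_forall_selection hne fun x hx =>
        hnets x (tsupport φ) hφ.2 fun ε _ _ => hx ε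

end TestFunctions

/-- Let `u` be a distribution on `ℝⁿ` (a linear functional, sequentially
continuous on test functions with supports in a common compact set) and `ρ` a
mollifier with `∫ ρ = 1`, `ρ_ε(x) = ε^{-n} ρ(x/ε)`. Then `u = 0` in `𝒟'(ℝⁿ)`
iff for every net `(x_ε)` contained in a fixed compact set,
`(u * ρ_ε)(x_ε) = u(y ↦ ρ_ε(x_ε - y)) → 0` as `ε → 0⁺`. -/
theorem distribution_zero_iff_regularizations_vanish_on_compact_nets
    (n : ℕ) (u : ((Fin n → ℝ) → ℝ) →ₗ[ℝ] ℝ)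
    (hcont : ∀ (φ : ℕ → (Fin n → ℝ) → ℝ) (K : Set (Fin n → ℝ)), IsCompact K →
      (∀ k, IsTestFunction (φ k) ∧ tsupport (φ k) ⊆ K) →
      (∀ m : ℕ, TendstoUniformly (fun k => iteratedFDeriv ℝ m (φ k)) 0 atTop) →
      Tendsto (fun k => u (φ k)) atTop (nhds 0))
    (ρ : (Fin n → ℝ) → ℝ) (hρ : IsTestFunction ρ) (hρ1 : ∫ x, ρ x = 1) :
    (∀ φ : (Fin n → ℝ) → ℝ, IsTestFunction φ → u φ = 0) ↔
      (∀ (x : ℝ → (Fin n → ℝ)) (K : Set (Fin n → ℝ)), IsCompact K →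
        (∀ ε : ℝ, 0 < ε → ε ≤ 1 → x ε ∈ K) →
        Tendsto (fun ε : ℝ => u (fun y => (ε ^ n)⁻¹ * ρ (ε⁻¹ • (x ε - y))))
          (nhdsWithin 0 (Set.Ioi 0)) (nhds 0)) := by
  have hu : IsDistribution u := isDistribution_of_tendsto_zero fun f ⟨K, hK, hf, hlim⟩ =>
    hcont f K hK hf fun m => by simpa using hlim m
  have hρ₀ : ∫ x, ρ x ≠ 0 := hρ1 ▸ one_ne_zero
  have general := distribution_zero_iff_regularizations_vanish_on_compact_nets_general hu hρ hρ₀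
  simp only [regularization, mollifier, Module.finrank_fin_fun] at general
  exact general
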